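/- Let E be a complex Banach lattice, let T be a positive bounded linear operator on E, and let re^{iθ} (with r > 0, θ ∈ ℝ) be an approximate eigenvalue of T which fulfils the dominated approximate eigenvector condition. Then re^{ikθ} ∈ σ(T) for every integer k ∈ ℤ. -/

import Mathlib

/-!
It suffices to treat `r = 1`; write `l = exp (iθ)`, and suppose that `l ^ k` is not in the spectrum.

In the model situation `T z = l z`, `T x = x`, `|z| ≤ x`, consider the homogeneous power
`F = z ^ k |z| ^ (1 - k)`. The scalar function `w ↦ w ^ k |w| ^ (1 - k)` differs from its tangent
plane along the ray through a unimodular `ω` at most by `C (|w| - Re (conj ω w))`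
(`exists_norm_zpow_sub_le`). Positivity of `T ^ n` transports this estimate, and taking the infimum
over `ω` gives `|T ^ n F - l ^ (k n) F| ≤ C (T ^ n |z| - |z|) ≤ C (x - |z|)`
(`IsHomPow.map_sub_le`). The Cesàro means of `l ^ (-k n) T ^ n F` tend to `0` because `1 - l⁻ᵏ T` is
invertible, so `|z| = |F| ≤ C (x - |z|)`, that is, `(1 + C⁻¹) |z| ≤ x`. Replacing `z` by
`(1 + C⁻¹) z` and iterating forces `z = 0`. For approximate eigenvectors the same estimates hold up
to errors tending to `0` in norm (`cesaro_bound`, `AsympDominated.improve`), and the iteration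
contradicts the lower bound on the norms of the approximate eigenvector.

No functional calculus is required to obtain `F`. Its real and imaginary parts are suprema of the
lower tangent bounds, which are real parts `Re (d z)` with `d` in a bounded subset of `ℂ`; such
suprema exist by completeness (`exists_isLUB`). The lower bounds lie below the upper bounds because
this is a statement about complex coefficients only (`norm_tangent_sub_le`). For the same reason the
modulus can be used in the form `sup Re (ω z)` over unimodular `ω` (`IsModulus`), without comparing
it with `cabs` beyond `sup Re (ω z) ≤ cabs z`.
-/

open Filter Topology Asymptotics

noncomputable section

/-- A complex Banach lattice, axiomatized via its order (given by the positive cone),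
its modulus map `cabs` and its canonical conjugation `conj`. -/
class ComplexBanachLattice (E : Type*) extends
    NormedAddCommGroup E, NormedSpace ℂ E, CompleteSpace E, PartialOrder E where
  /-- the modulus map `z ↦ |z|` -/
  cabs : E → E
  /-- the canonical conjugation of the complex Banach lattice -/
  conj : E → E
  add_le_add_left' : ∀ a b : E, a ≤ b → ∀ c : E, c + a ≤ c + b
  smul_nonneg' : ∀ (r : ℝ) (x : E), 0 ≤ r → 0 ≤ x → 0 ≤ (r : ℂ) • x
  isClosed_nonneg : IsClosed {x : E | 0 ≤ x}
  cabs_nonneg : ∀ x : E, 0 ≤ cabs x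
  cabs_of_nonneg : ∀ x : E, 0 ≤ x → cabs x = x
  cabs_eq_zero_iff : ∀ x : E, cabs x = 0 ↔ x = 0
  cabs_smul : ∀ (c : ℂ) (x : E), cabs (c • x) = (‖c‖ : ℂ) • cabs x
  cabs_add_le : ∀ x y : E, cabs (x + y) ≤ cabs x + cabs y
  norm_cabs : ∀ x : E, ‖cabs x‖ = ‖x‖
  norm_mono : ∀ x y : E, cabs x ≤ cabs y → ‖x‖ ≤ ‖y‖
  conj_add : ∀ x y : E, conj (x + y) = conj x + conj y
  conj_smul : ∀ (c : ℂ) (x : E), conj (c • x) = (starRingEnd ℂ c) • conj x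
  conj_conj : ∀ x : E, conj (conj x) = x
  conj_of_nonneg : ∀ x : E, 0 ≤ x → conj x = x
  cabs_conj : ∀ x : E, cabs (conj x) = cabs x
  cabs_isLUB : ∀ x : E, conj x = x → IsLUB {x, -x} (cabs x)
  exists_lub : ∀ x y : E, conj x = x → conj y = y → ∃ z : E, IsLUB {x, y} z

open ComplexBanachLattice

/-- A bounded linear operator on a complex Banach lattice is positive
if it maps positive elements to positive elements. -/
def IsPosOp {E : Type*} [ComplexBanachLattice E] (T : E →L[ℂ] E) : Prop :=
  ∀ x : E, 0 ≤ x → 0 ≤ T x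

/-- `(x n)` is an approximate eigenvector of `T` for the approximate eigenvalue `μ`:
`0 < liminf ‖xₙ‖ ≤ limsup ‖xₙ‖ < ∞` and `(μ - T) xₙ → 0`. -/
def IsApproxEigenvector {E : Type*} [ComplexBanachLattice E]
    (T : E →L[ℂ] E) (μ : ℂ) (x : ℕ → E) : Prop :=
  (∃ c : ℝ, 0 < c ∧ ∀ᶠ n in atTop, c ≤ ‖x n‖) ∧
  (∃ C : ℝ, ∀ n, ‖x n‖ ≤ C) ∧
  Tendsto (fun n => μ • x n - T (x n)) atTop (𝓝 0)

namespace DominatedApprox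

/-! ### Order and real parts in a complex Banach lattice -/

variable {E : Type*} [ComplexBanachLattice E]

instance : IsOrderedAddMonoid E where
  add_le_add_left a b h c := by
    rw [add_comm a c, add_comm b c]; exact add_le_add_left' a b h c

instance : IsOrderedModule ℝ E :=
  .of_smul_nonneg fun a ha b hb => by
    rw [← Complex.coe_smul]; exact smul_nonneg' a b ha hb

instance : OrderClosedTopology E where
  isClosed_le' := by
    have h : {p : E × E | p.1 ≤ p.2} = (fun p : E × E => p.2 - p.1) ⁻¹' {x : E | 0 ≤ x} := by
      ext p; simp
    rw [h]
    exact isClosed_nonneg.preimage (by fun_prop)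

lemma conj_real_smul (r : ℝ) (x : E) : conj (r • x) = r • conj x := by
  rw [← Complex.coe_smul, conj_smul, Complex.conj_ofReal, Complex.coe_smul]

lemma cabs_real_smul {r : ℝ} (hr : 0 ≤ r) (x : E) : cabs (r • x) = r • cabs x := by
  rw [← Complex.coe_smul, cabs_smul, Complex.norm_real, Real.norm_of_nonneg hr, Complex.coe_smul]

/-- The real part `(z + conj z) / 2` of an element of a complex Banach lattice. -/
def reL : E →ₗ[ℝ] E where
  toFun z := (1 / 2 : ℝ) • (z + conj z)
  map_add' x y := by rw [conj_add]; module
  map_smul' r x := by rw [conj_real_smul, RingHom.id_apply]; module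

lemma reL_def (z : E) : reL z = (1 / 2 : ℝ) • (z + conj z) := rfl

lemma conj_reL (z : E) : conj (reL z) = reL z := by
  rw [reL_def, conj_real_smul, conj_add, conj_conj, add_comm]

lemma reL_eq_self {x : E} (hx : conj x = x) : reL x = x := by
  rw [reL_def, hx]; module

lemma reL_I_smul {x : E} (hx : conj x = x) : reL (Complex.I • x) = 0 := by
  rw [reL_def, conj_smul, hx, Complex.conj_I]; module

lemma conj_of_le {x y : E} (hx : conj x = x) (h : x ≤ y) : conj y = y := by
  have h1 := conj_of_nonneg (y - x) (sub_nonneg.2 h)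
  have h2 : y = (y - x) + x := by abel
  rw [h2, conj_add, h1, hx]

lemma reL_re_smul (d : ℂ) (z : E) :
    reL (d • z) = d.re • reL z + d.im • reL (Complex.I • z) := by
  conv_lhs => rw [← Complex.re_add_im d, add_smul, mul_smul, Complex.coe_smul, Complex.coe_smul,
    map_add, map_smul, map_smul]

lemma eq_reL_add_I_smul (z : E) : z = reL z + Complex.I • reL ((-Complex.I) • z) := by
  rw [reL_def, reL_def, conj_smul, map_neg, Complex.conj_I, neg_neg]
  simp only [← Complex.coe_smul]
  match_scalars
  · linear_combination (1 / 2 : ℂ) * Complex.I_sq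
  · linear_combination (-1 / 2 : ℂ) * Complex.I_sq

lemma le_cabs {x : E} (hx : conj x = x) : x ≤ cabs x :=
  (cabs_isLUB x hx).1 (by simp)

lemma reL_le_cabs (z : E) : reL z ≤ cabs z := by
  refine (le_cabs (conj_reL z)).trans ?_
  rw [reL_def, cabs_real_smul (by norm_num)]
  have h := cabs_add_le z (conj z)
  rw [cabs_conj] at h
  linear_combination (norm := exact le_of_eq (by module)) (1 / 2 : ℝ) • h

lemma reL_smul_le_cabs (d : ℂ) (z : E) : reL (d • z) ≤ ‖d‖ • cabs z := by
  refine (reL_le_cabs _).trans ?_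
  rw [cabs_smul, Complex.coe_smul]

lemma cabs_le_of_real {x u : E} (hx : conj x = x) (h1 : x ≤ u) (h2 : -x ≤ u) : cabs x ≤ u :=
  (cabs_isLUB x hx).2 (by rintro y (rfl | rfl) <;> assumption)

lemma norm_le_of_cabs_le {x u : E} (h : cabs x ≤ u) : ‖x‖ ≤ ‖u‖ :=
  norm_mono x u (by rwa [cabs_of_nonneg u ((cabs_nonneg x).trans h)])

lemma norm_le_of_nonneg_le {x u : E} (h0 : 0 ≤ x) (h : x ≤ u) : ‖x‖ ≤ ‖u‖ :=
  norm_le_of_cabs_le (by rwa [cabs_of_nonneg x h0])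

/-- An element all of whose rotated real parts are below `u` is controlled in norm by `u`. The
factor `2` comes from estimating the modulus by the sum of the moduli of the real and imaginary
parts. -/
lemma norm_le_two_mul {z u : E} (h : ∀ γ : ℂ, ‖γ‖ = 1 → reL (γ • z) ≤ u) : ‖z‖ ≤ 2 * ‖u‖ := by
  have h1 : cabs (reL z) ≤ u := by
    refine cabs_le_of_real (conj_reL z) ?_ ?_
    · simpa using h 1 (by simp)
    · simpa using h (-1) (by simp)
  have h2 : cabs (reL ((-Complex.I) • z)) ≤ u := by
    refine cabs_le_of_real (conj_reL _) (h _ (by simp)) ?_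
    simpa using h Complex.I (by simp)
  have h3 : cabs z ≤ (2 : ℝ) • u := by
    conv_lhs => rw [eq_reL_add_I_smul z]
    refine (cabs_add_le _ _).trans ?_
    rw [cabs_smul, Complex.norm_I, Complex.ofReal_one, one_smul, two_smul]
    exact add_le_add h1 h2
  have h4 := norm_le_of_cabs_le h3
  rwa [norm_smul, Real.norm_of_nonneg (by norm_num)] at h4

/-! ### Suprema of rotated real parts -/

lemma exists_isLUB_finset (z : E) (t : Finset ℂ) (ht : t.Nonempty) :
    ∃ s : E, conj s = s ∧ IsLUB ((fun d : ℂ => reL (d • z)) '' (t : Set ℂ)) s := by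
  induction ht using Finset.Nonempty.cons_induction with
  | singleton a => exact ⟨reL (a • z), conj_reL _, by simp⟩
  | cons a t ha ht ih =>
    obtain ⟨s, hs, hlub⟩ := ih
    obtain ⟨w, hw⟩ := exists_lub (reL (a • z)) s (conj_reL _) hs
    refine ⟨w, conj_of_le hs (hw.1 (by simp)), ?_⟩
    rw [Finset.coe_cons, Set.image_insert_eq]
    constructor
    · rintro _ (rfl | hx)
      · exact hw.1 (by simp)
      · exact (hlub.1 hx).trans (hw.1 (by simp))
    · intro u hu
      refine hw.2 ?_
      rintro _ (rfl | rfl)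
      · exact hu (by simp)
      · exact hlub.2 fun x hx => hu (Set.mem_insert_of_mem _ hx)

/-- A bounded family of real parts `Re (d z)` has a supremum although the lattice need not be
order complete: finite nets give finite suprema which are Cauchy relative to `|z|`. -/
lemma exists_isLUB (z : E) (D : Set ℂ) (hD : D.Nonempty) (hb : TotallyBounded D) :
    ∃ s : E, conj s = s ∧ IsLUB ((fun d : ℂ => reL (d • z)) '' D) s := by
  have hε : ∀ n : ℕ, (0 : ℝ) < (1 / 2) ^ n := fun n => by positivity
  have hex : ∀ n : ℕ, ∃ s : E, conj s = s ∧
      (∀ d ∈ D, reL (d • z) ≤ s + ((1 / 2 : ℝ) ^ n) • cabs z) ∧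
      ∀ u ∈ upperBounds ((fun d : ℂ => reL (d • z)) '' D), s ≤ u := by
    intro n
    obtain ⟨t, htD, htf, hcov⟩ := Metric.finite_approx_of_totallyBounded hb _ (hε n)
    have htn : htf.toFinset.Nonempty := by
      obtain ⟨d, hd⟩ := hD
      obtain ⟨y, hy, -⟩ := Set.mem_iUnion₂.1 (hcov hd)
      exact ⟨y, by simpa using hy⟩
    obtain ⟨s, hs, hlub⟩ := exists_isLUB_finset z _ htn
    rw [Set.Finite.coe_toFinset] at hlub
    refine ⟨s, hs, fun d hd => ?_, fun u hu => hlub.2 fun x hx => hu (Set.image_mono htD hx)⟩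
    obtain ⟨y, hy, hdy⟩ := Set.mem_iUnion₂.1 (hcov hd)
    have h1 : reL (y • z) ≤ s := hlub.1 ⟨y, hy, rfl⟩
    have h2 := reL_smul_le_cabs (d - y) z
    have h3 : ‖d - y‖ • cabs z ≤ ((1 / 2 : ℝ) ^ n) • cabs z :=
      smul_le_smul_of_nonneg_right (by rw [← dist_eq_norm]; exact (Metric.mem_ball.1 hdy).le)
        (cabs_nonneg z)
    rw [sub_smul, map_sub] at h2
    linear_combination (norm := exact le_of_eq (by module)) h1 + h2 + h3
  choose s hs hup hlow using hex
  have hle : ∀ m n, s m ≤ s n + ((1 / 2 : ℝ) ^ n) • cabs z := fun m n =>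
    hlow m _ (by rintro _ ⟨d, hd, rfl⟩; exact hup n d hd)
  have hdist : ∀ n, dist (s n) (s (n + 1)) ≤ (2 * ‖z‖) / 2 / 2 ^ n := by
    intro n
    have h1 : cabs (s n - s (n + 1)) ≤ ((1 / 2 : ℝ) ^ n) • cabs z := by
      refine cabs_le_of_real ?_ ?_ ?_
      · rw [sub_eq_add_neg, ← neg_one_smul ℝ, conj_add, conj_real_smul, hs, hs]
      · have h2 : ((1 / 2 : ℝ) ^ (n + 1)) • cabs z ≤ ((1 / 2 : ℝ) ^ n) • cabs z :=
          smul_le_smul_of_nonneg_right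
            (pow_le_pow_of_le_one (by norm_num) (by norm_num) n.le_succ) (cabs_nonneg z)
        linear_combination (norm := exact le_of_eq (by module)) hle n (n + 1) + h2
      · linear_combination (norm := exact le_of_eq (by module)) hle (n + 1) n
    have h2 := norm_le_of_cabs_le h1
    rw [norm_smul, norm_cabs, Real.norm_of_nonneg (hε n).le] at h2
    rw [dist_eq_norm]
    refine h2.trans (le_of_eq ?_)
    rw [one_div, inv_pow]; field_simp
  obtain ⟨l, hl⟩ := cauchySeq_tendsto_of_complete (cauchySeq_of_le_geometric_two hdist)
  have hupper : ∀ d ∈ D, reL (d • z) ≤ l := by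
    intro d hd
    have h0 : Tendsto (fun n : ℕ => s n + ((1 / 2 : ℝ) ^ n) • cabs z) atTop (𝓝 (l + (0 : ℝ) • cabs z)) :=
      hl.add ((tendsto_pow_atTop_nhds_zero_of_lt_one (by norm_num) (by norm_num)).smul_const _)
    rw [zero_smul, add_zero] at h0
    exact ge_of_tendsto' h0 fun n => hup n d hd
  refine ⟨l, ?_, ?_, ?_⟩
  · obtain ⟨d, hd⟩ := hD
    exact conj_of_le (conj_reL _) (hupper d hd)
  · rintro _ ⟨d, hd, rfl⟩; exact hupper d hd
  · exact fun u hu => le_of_tendsto' hl fun n => hlow n u hu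

/-- `IsModulus z m` says that `m` is the supremum of all rotated real parts of `z`, i.e. that
`m` is the modulus of `z` described through the order. -/
def IsModulus (z m : E) : Prop :=
  IsLUB ((fun d : ℂ => reL (d • z)) '' {d : ℂ | ‖d‖ = 1}) m

lemma totallyBounded_of_norm_le {D : Set ℂ} (B : ℝ) (h : ∀ d ∈ D, ‖d‖ ≤ B) : TotallyBounded D :=
  (isCompact_closedBall (0 : ℂ) B).totallyBounded.subset fun d hd => by simpa using h d hd

lemma exists_isModulus (z : E) : ∃ m, IsModulus z m := by
  obtain ⟨m, -, hm⟩ := exists_isLUB z {d : ℂ | ‖d‖ = 1} ⟨1, by simp⟩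
    (totallyBounded_of_norm_le 1 fun d hd => le_of_eq hd)
  exact ⟨m, hm⟩

lemma IsModulus.le {z m : E} (h : IsModulus z m) {d : ℂ} (hd : ‖d‖ = 1) : reL (d • z) ≤ m :=
  h.1 ⟨d, hd, rfl⟩

lemma IsModulus.nonneg {z m : E} (h : IsModulus z m) : 0 ≤ m := by
  have h1 := h.le (d := 1) (by simp)
  have h2 := h.le (d := -1) (by simp)
  rw [neg_smul, map_neg] at h2
  linear_combination (norm := exact le_of_eq (by module)) (1 / 2 : ℝ) • h1 + (1 / 2 : ℝ) • h2

lemma IsModulus.le_of_forall {z m u : E} (h : IsModulus z m)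
    (hu : ∀ d : ℂ, ‖d‖ = 1 → reL (d • z) ≤ u) : m ≤ u :=
  h.2 (by rintro _ ⟨d, hd, rfl⟩; exact hu d hd)

lemma IsModulus.reL_smul_le {z m : E} (h : IsModulus z m) (d : ℂ) {B : ℝ} (hd : ‖d‖ ≤ B) :
    reL (d • z) ≤ B • m := by
  refine le_trans ?_ (smul_le_smul_of_nonneg_right hd h.nonneg)
  rcases eq_or_ne d 0 with rfl | h0
  · simp
  · have hn : ‖d‖ ≠ 0 := norm_ne_zero_iff.2 h0
    have h1 := h.le (d := ((‖d‖⁻¹ : ℝ) : ℂ) * d) (by simp [hn])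
    have h2 : d • z = ‖d‖ • ((((‖d‖⁻¹ : ℝ) : ℂ) * d) • z) := by
      rw [mul_smul, Complex.coe_smul, smul_smul, mul_inv_cancel₀ hn, one_smul]
    rw [h2, map_smul]
    exact smul_le_smul_of_nonneg_left h1 (norm_nonneg d)

lemma IsModulus.le_cabs {z m : E} (h : IsModulus z m) : m ≤ cabs z :=
  h.le_of_forall fun d hd => by simpa [hd] using reL_smul_le_cabs d z

lemma IsModulus.norm_le {z m : E} (h : IsModulus z m) : ‖m‖ ≤ ‖z‖ := by
  rw [← norm_cabs z]; exact norm_le_of_nonneg_le h.nonneg h.le_cabs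

/-! ### The tangent planes of the homogeneous power `w ↦ w ^ k |w| ^ (1 - k)` -/

lemma norm_pow_sub_le (n : ℕ) {v : ℂ} (hv : ‖v‖ = 1) :
    ‖v ^ n - 1 - n * (v - 1)‖ ≤ (n : ℝ) ^ 2 * ‖v - 1‖ ^ 2 := by
  induction n with
  | zero => simp
  | succ n ih =>
    have h : v ^ (n + 1) - 1 - ((n + 1 : ℕ) : ℂ) * (v - 1)
        = v * (v ^ n - 1 - n * (v - 1)) + n * (v - 1) ^ 2 := by push_cast; ring
    rw [h]
    refine (norm_add_le _ _).trans ?_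
    rw [norm_mul, norm_mul, hv, norm_pow, Complex.norm_natCast]
    push_cast
    nlinarith [sq_nonneg ‖v - 1‖, mul_nonneg (Nat.cast_nonneg (α := ℝ) n) (sq_nonneg ‖v - 1‖)]

lemma norm_sub_one_sq {v : ℂ} (hv : ‖v‖ = 1) : ‖v - 1‖ ^ 2 = 2 * (1 - v.re) := by
  have h1 : ‖v‖ ^ 2 = 1 := by rw [hv]; norm_num
  rw [← Complex.normSq_eq_norm_sq, Complex.normSq_apply] at *
  simp only [Complex.sub_re, Complex.sub_im, Complex.one_re, Complex.one_im]
  nlinarith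

lemma exists_norm_pow_sub_le (n : ℕ) : ∃ C : ℝ, 0 < C ∧ ∀ v : ℂ, ‖v‖ = 1 →
    ‖v ^ n - (v.re + n * v.im * Complex.I)‖ ≤ C * (1 - v.re) := by
  refine ⟨2 * (n : ℝ) ^ 2 + |(n : ℝ) - 1| + 1, by positivity, fun v hv => ?_⟩
  have h1 : 0 ≤ 1 - v.re := by
    have := Complex.re_le_norm v
    linarith
  have h : v ^ n - (v.re + n * v.im * Complex.I)
      = (v ^ n - 1 - n * (v - 1)) + ((((n : ℝ) - 1) * (v.re - 1) : ℝ) : ℂ) := by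
    have hv' : v = v.re + v.im * Complex.I := (Complex.re_add_im v).symm
    push_cast
    linear_combination (n : ℂ) * hv'
  rw [h]
  refine (norm_add_le _ _).trans ?_
  have h2 := norm_pow_sub_le n hv
  rw [norm_sub_one_sq hv] at h2
  have h3 : ‖((((n : ℝ) - 1) * (v.re - 1) : ℝ) : ℂ)‖ = |(n : ℝ) - 1| * (1 - v.re) := by
    rw [Complex.norm_real, Real.norm_eq_abs, abs_mul, abs_sub_comm v.re, abs_of_nonneg h1]
  rw [h3]
  nlinarith

/-- The function `v ↦ v ^ k` on the unit circle touches its tangent at `v = 1` to second order,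
and `1 - Re v` is of second order as well. -/
lemma exists_norm_zpow_sub_le (k : ℤ) : ∃ C : ℝ, 0 < C ∧ ∀ v : ℂ, ‖v‖ = 1 →
    ‖v ^ k - (v.re + k * v.im * Complex.I)‖ ≤ C * (1 - v.re) := by
  obtain ⟨n, rfl | rfl⟩ := k.eq_nat_or_neg
  · simpa using exists_norm_pow_sub_le n
  · obtain ⟨C, hC, h⟩ := exists_norm_pow_sub_le n
    refine ⟨C, hC, fun v hv => ?_⟩
    have h1 := h (starRingEnd ℂ v) (by simpa using hv)
    have h2 : starRingEnd ℂ v = v⁻¹ := (Complex.inv_eq_conj hv).symm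
    rw [Complex.conj_re, Complex.conj_im] at h1
    rw [h2] at h1
    convert h1 using 3
    · simp
    · push_cast; ring

/-- The coefficient `d` for which `w ↦ Re (d w)` is the tangent functional of
`w ↦ Re (γ w ^ k |w| ^ (1 - k))` along the ray through the unimodular number `ω`. -/
def tangent (k : ℤ) (γ ω : ℂ) : ℂ :=
  starRingEnd ℂ ω * (((γ * ω ^ k).re : ℂ) + k * (γ * ω ^ k).im * Complex.I)

lemma conj_mul_self_of_norm {ω : ℂ} (h : ‖ω‖ = 1) : starRingEnd ℂ ω * ω = 1 := by
  rw [Complex.conj_mul', h]; norm_num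

lemma ne_zero_of_norm {ω : ℂ} (h : ‖ω‖ = 1) : ω ≠ 0 := by
  rintro rfl; simp at h

lemma tangent_neg (k : ℤ) (γ ω : ℂ) : tangent k (-γ) ω = -tangent k γ ω := by
  simp only [tangent, neg_mul, Complex.neg_re, Complex.neg_im]; push_cast; ring

/-- The tangent functional depends real-linearly on `γ`. -/
lemma tangent_decomp (k : ℤ) (γ ω : ℂ) :
    tangent k γ ω = γ.re * tangent k 1 ω - γ.im * tangent k (-Complex.I) ω := by
  simp only [tangent, Complex.mul_re, Complex.mul_im, Complex.one_re, Complex.one_im,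
    Complex.neg_re, Complex.neg_im, Complex.I_re, Complex.I_im]
  push_cast; ring

lemma tangent_inv_zpow (k : ℤ) {ω : ℂ} (h : ‖ω‖ = 1) :
    tangent k ((ω ^ k)⁻¹) ω = starRingEnd ℂ ω := by
  have := zpow_ne_zero k (ne_zero_of_norm h)
  simp [tangent, inv_mul_cancel₀ this]

/-- Covariance of the tangent functionals under rotation. -/
lemma tangent_rotate (k : ℤ) (γ ω : ℂ) {μ : ℂ} (h : ‖μ‖ = 1) :
    tangent k (γ * μ ^ k) (μ⁻¹ * ω) = tangent k γ ω * μ := by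
  have h0 := zpow_ne_zero k (ne_zero_of_norm h)
  have h1 : γ * μ ^ k * (μ⁻¹ * ω) ^ k = γ * ω ^ k := by
    rw [mul_zpow, inv_zpow]; field_simp
  have h2 : starRingEnd ℂ (μ⁻¹ * ω) = μ * starRingEnd ℂ ω := by
    rw [map_mul, Complex.inv_eq_conj h, Complex.conj_conj]
  rw [tangent, tangent, h1, h2]; ring

lemma norm_tangent_le (k : ℤ) {γ ω : ℂ} (hγ : ‖γ‖ = 1) (hω : ‖ω‖ = 1) :
    ‖tangent k γ ω‖ ≤ 1 + |(k : ℝ)| := by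
  have hn : ‖γ * ω ^ k‖ = 1 := by simp [hγ, hω]
  rw [tangent, norm_mul, RCLike.norm_conj, hω, one_mul]
  refine (norm_add_le _ _).trans ?_
  have h1 := Complex.abs_re_le_norm (γ * ω ^ k)
  have h2 := Complex.abs_im_le_norm (γ * ω ^ k)
  rw [hn] at h1 h2
  rw [norm_mul, norm_mul, Complex.norm_I, Complex.norm_real, Complex.norm_real,
    Complex.norm_intCast, Real.norm_eq_abs, Real.norm_eq_abs]
  nlinarith [abs_nonneg (k : ℝ)]

lemma abs_tangent_sub_le {k : ℤ} {C : ℝ}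
    (hC : ∀ v : ℂ, ‖v‖ = 1 → ‖v ^ k - (v.re + k * v.im * Complex.I)‖ ≤ C * (1 - v.re))
    {γ ω w : ℂ} (hγ : ‖γ‖ = 1) (hω : ‖ω‖ = 1) (hw : ‖w‖ = 1) :
    |(tangent k γ ω * w).re - (γ * w ^ k).re| ≤ C * (1 - (starRingEnd ℂ ω * w).re) := by
  set v := starRingEnd ℂ ω * w with hv
  set τ := γ * ω ^ k with hτ
  have hvn : ‖v‖ = 1 := by simp [hv, hω, hw]
  have hτn : ‖τ‖ = 1 := by simp [hτ, hω, hγ]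
  have hw' : w = ω * v := by
    rw [hv, ← mul_assoc, mul_comm ω, conj_mul_self_of_norm hω, one_mul]
  have h1 : γ * w ^ k = τ * v ^ k := by rw [hw', mul_zpow, hτ]; ring
  have h2 : (tangent k γ ω * w).re = (τ * (v.re + k * v.im * Complex.I)).re := by
    have : tangent k γ ω * w = ((τ.re : ℂ) + k * τ.im * Complex.I) * v := by
      rw [tangent, hv]; ring
    rw [this]
    simp
    ring
  rw [h1, h2, ← Complex.sub_re, ← mul_sub]
  refine (Complex.abs_re_le_norm _).trans ?_
  rw [norm_mul, hτn, one_mul, norm_sub_rev]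
  exact hC v hvn

/-- The lower tangent bound at `ω` stays below the upper tangent bound at `η`, since both enclose
the same function. Written as a bound on the coefficient of the difference. -/
lemma norm_tangent_sub_le {k : ℤ} {C : ℝ} (hC0 : 0 < C)
    (hC : ∀ v : ℂ, ‖v‖ = 1 → ‖v ^ k - (v.re + k * v.im * Complex.I)‖ ≤ C * (1 - v.re))
    {γ ω η : ℂ} (hγ : ‖γ‖ = 1) (hω : ‖ω‖ = 1) (hη : ‖η‖ = 1) :
    ‖tangent k γ ω - tangent k γ η + C * starRingEnd ℂ ω + C * starRingEnd ℂ η‖ ≤ 2 * C := by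
  set c := tangent k γ ω - tangent k γ η + C * starRingEnd ℂ ω + C * starRingEnd ℂ η with hc
  rcases eq_or_ne c 0 with h0 | h0
  · rw [h0, norm_zero]; linarith
  have hn : ‖c‖ ≠ 0 := norm_ne_zero_iff.2 h0
  -- the supporting direction of `c` recovers its norm as a real part
  set w : ℂ := ((‖c‖⁻¹ : ℝ) : ℂ) * starRingEnd ℂ c with hw
  have hwn : ‖w‖ = 1 := by simp [hw, hn]
  have h1 : (c * w).re = ‖c‖ := by
    have : c * w = ((‖c‖ : ℝ) : ℂ) := by
      rw [hw, mul_left_comm, Complex.mul_conj']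
      have : ((‖c‖ : ℝ) : ℂ) ≠ 0 := by exact_mod_cast hn
      push_cast
      field_simp
    rw [this, Complex.ofReal_re]
  have h2 := abs_le.1 (abs_tangent_sub_le hC hγ hω hwn)
  have h3 := abs_le.1 (abs_tangent_sub_le hC hγ hη hwn)
  have h4 : (c * w).re = (tangent k γ ω * w).re - (tangent k γ η * w).re
      + C * (starRingEnd ℂ ω * w).re + C * (starRingEnd ℂ η * w).re := by
    rw [hc, add_mul, add_mul, sub_mul, mul_assoc, mul_assoc, Complex.add_re, Complex.add_re,
      Complex.sub_re, Complex.re_ofReal_mul, Complex.re_ofReal_mul]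
  rw [← h1, h4]
  linarith [h2.2, h3.1]

/-! ### The homogeneous power of an element -/

/-- `IsHomPow k C z m F` expresses that `F` behaves like `z ^ k |z| ^ (1 - k)`: with `m`
the modulus of `z`, the difference between `F` and its tangent plane along the ray through `ω` is
at most `C (m - Re (conj ω z))`. Replacing `γ` by `-γ` gives the reverse estimate. -/
def IsHomPow (k : ℤ) (C : ℝ) (z m F : E) : Prop :=
  ∀ γ ω : ℂ, ‖γ‖ = 1 → ‖ω‖ = 1 →
    reL (γ • F) - reL (tangent k γ ω • z) ≤ C • (m - reL (starRingEnd ℂ ω • z))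

lemma reL_real_mul_smul (r : ℝ) (d : ℂ) (z : E) :
    reL (((r : ℂ) * d) • z) = r • reL (d • z) := by
  rw [mul_smul, Complex.coe_smul, map_smul]

lemma IsModulus.exists_part {k : ℤ} {C : ℝ} (hC0 : 0 < C)
    (hC : ∀ v : ℂ, ‖v‖ = 1 → ‖v ^ k - (v.re + k * v.im * Complex.I)‖ ≤ C * (1 - v.re))
    {z m : E} (hm : IsModulus z m) {γ : ℂ} (hγ : ‖γ‖ = 1) :
    ∃ X : E, conj X = X ∧ ∀ ω : ℂ, ‖ω‖ = 1 →
      X - reL (tangent k γ ω • z) ≤ C • (m - reL (starRingEnd ℂ ω • z)) ∧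
      -(X - reL (tangent k γ ω • z)) ≤ C • (m - reL (starRingEnd ℂ ω • z)) := by
  have hmr : conj m = m := conj_of_nonneg m hm.nonneg
  -- the supremum of all lower tangent bounds, shifted by `C m`
  obtain ⟨s, hs, hlub⟩ := exists_isLUB z
    ((fun ω => tangent k γ ω + C * starRingEnd ℂ ω) '' {ω : ℂ | ‖ω‖ = 1}) ⟨_, 1, by simp, rfl⟩
    (totallyBounded_of_norm_le (1 + |(k : ℝ)| + C) (by
      rintro _ ⟨ω, hω, rfl⟩
      refine (norm_add_le _ _).trans (add_le_add (norm_tangent_le k hγ hω) ?_)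
      rw [norm_mul, RCLike.norm_conj, hω, Complex.norm_real, Real.norm_of_nonneg hC0.le, mul_one]))
  refine ⟨s - C • m, ?_, fun ω hω => ⟨?_, ?_⟩⟩
  · rw [sub_eq_add_neg, ← neg_smul, conj_add, conj_real_smul, hs, hmr]
  · have h : s ≤ reL (tangent k γ ω • z) + (2 * C) • m - C • reL (starRingEnd ℂ ω • z) := by
      refine hlub.2 ?_
      rintro _ ⟨_, ⟨η, hη, rfl⟩, rfl⟩
      have h1 := hm.reL_smul_le _ (norm_tangent_sub_le hC0 hC hγ hη hω)
      simp only [add_smul, sub_smul, map_add, map_sub, reL_real_mul_smul] at h1 ⊢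
      linear_combination (norm := exact le_of_eq (by module)) h1
    linear_combination (norm := exact le_of_eq (by module)) h
  · have h : reL ((tangent k γ ω + C * starRingEnd ℂ ω) • z) ≤ s := hlub.1 ⟨_, ⟨ω, hω, rfl⟩, rfl⟩
    rw [add_smul, map_add, reL_real_mul_smul] at h
    linear_combination (norm := exact le_of_eq (by module)) h

lemma smul_le_of_abs_le {P U : E} (h1 : P ≤ U) (h2 : -P ≤ U) {a : ℝ} (ha : |a| ≤ 1) :
    a • P ≤ U := by
  obtain ⟨h3, h4⟩ := abs_le.1 ha
  have h5 : 0 ≤ (1 + a) / 2 := by linarith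
  have h6 : 0 ≤ (1 - a) / 2 := by linarith
  have h7 := add_le_add (smul_le_smul_of_nonneg_left h1 h5) (smul_le_smul_of_nonneg_left h2 h6)
  linear_combination (norm := exact le_of_eq (by module)) h7

lemma exists_isHomPow (k : ℤ) : ∃ C : ℝ, 0 < C ∧ ∀ z m : E, IsModulus z m →
    ∃ F : E, IsHomPow k C z m F := by
  obtain ⟨C, hC0, hC⟩ := exists_norm_zpow_sub_le k
  refine ⟨2 * C, by positivity, fun z m hm => ?_⟩
  obtain ⟨X, hX, hXω⟩ := hm.exists_part hC0 hC (γ := 1) (by simp)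
  obtain ⟨Y, hY, hYω⟩ := hm.exists_part hC0 hC (γ := -Complex.I) (by simp)
  refine ⟨X + Complex.I • Y, fun γ ω hγ hω => ?_⟩
  have hre : |γ.re| ≤ 1 := hγ ▸ Complex.abs_re_le_norm γ
  have him : |-γ.im| ≤ 1 := by rw [abs_neg]; exact hγ ▸ Complex.abs_im_le_norm γ
  have h1 := smul_le_of_abs_le (hXω ω hω).1 (hXω ω hω).2 hre
  have h2 := smul_le_of_abs_le (hYω ω hω).1 (hYω ω hω).2 him
  have h3 : reL (γ • (X + Complex.I • Y)) = γ.re • X - γ.im • Y := by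
    rw [reL_re_smul, smul_add, smul_smul, Complex.I_mul_I, neg_one_smul, map_add, map_add, map_neg,
      reL_eq_self hX, reL_eq_self hY, reL_I_smul hX, reL_I_smul hY]
    module
  have h4 : reL (tangent k γ ω • z) = γ.re • reL (tangent k 1 ω • z)
      - γ.im • reL (tangent k (-Complex.I) ω • z) := by
    rw [tangent_decomp, sub_smul, map_sub, reL_real_mul_smul, reL_real_mul_smul]
  rw [h3, h4]
  linear_combination (norm := exact le_of_eq (by module)) h1 + h2

/-! ### Positive operators -/

lemma _root_.IsPosOp.mono {T : E →L[ℂ] E} (hT : IsPosOp T) {x y : E} (h : x ≤ y) : T x ≤ T y := by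
  rw [← sub_nonneg, ← map_sub]; exact hT _ (sub_nonneg.2 h)

lemma _root_.IsPosOp.pow {T : E →L[ℂ] E} (hT : IsPosOp T) (n : ℕ) : IsPosOp (T ^ n) := by
  induction n with
  | zero => exact fun x hx => hx
  | succ n ih => intro x hx; rw [pow_succ]; exact ih _ (hT x hx)

lemma _root_.IsPosOp.conj_map {T : E →L[ℂ] E} (hT : IsPosOp T) {x : E} (hx : conj x = x) :
    conj (T x) = T x := by
  -- a real element is the difference `|x| - (|x| - x)` of positive elements
  have h1 := conj_of_nonneg _ (hT _ (sub_nonneg.2 (le_cabs hx)))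
  have h2 := conj_of_nonneg _ (hT _ (cabs_nonneg x))
  have h3 : T x = T (cabs x) + (-1 : ℝ) • T (cabs x - x) := by rw [map_sub]; module
  rw [h3, conj_add, conj_real_smul, h1, h2]

lemma _root_.IsPosOp.map_reL {T : E →L[ℂ] E} (hT : IsPosOp T) (z : E) : T (reL z) = reL (T z) := by
  conv_rhs => rw [eq_reL_add_I_smul z]
  rw [map_add, map_smul, map_add, reL_I_smul (hT.conj_map (conj_reL _)), add_zero,
    reL_eq_self (hT.conj_map (conj_reL _))]

lemma map_real_smul (T : E →L[ℂ] E) (r : ℝ) (x : E) : T (r • x) = r • T x := by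
  rw [← Complex.coe_smul, map_smul, Complex.coe_smul]

/-- If `S z` is close to the rotation `μ z`, then `S F` is close to `μ ^ k F`, up to the amount
by which `S` increases the modulus of `z`. -/
lemma IsHomPow.map_sub_le {k : ℤ} {C : ℝ} (hC : 0 < C) {z m F : E} (hm : IsModulus z m)
    (hF : IsHomPow k C z m F) {S : E →L[ℂ] E} (hS : IsPosOp S) {μ : ℂ} (hμ : ‖μ‖ = 1)
    {γ : ℂ} (hγ : ‖γ‖ = 1) :
    reL (γ • (S F - μ ^ k • F)) ≤
      C • (S m - m) + (1 + |(k : ℝ)| + C) • cabs (S z - μ • z) := by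
  set v := S z - μ • z with hv
  set K := 1 + |(k : ℝ)| + C with hK
  have hSz : S z = v + μ • z := by rw [hv]; abel
  have key : ∀ ω : ℂ, ‖ω‖ = 1 → reL (ω • z) ≤ (2 * C)⁻¹ • (C • (S m + m) + K • cabs v
      - reL (γ • (S F - μ ^ k • F))) := by
    intro ρ hρ
    -- choose `ω` with `conj ω * μ = ρ`
    set ω := μ * starRingEnd ℂ ρ with hωdef
    have hω : ‖ω‖ = 1 := by simp [hωdef, hμ, hρ]
    have e1 : starRingEnd ℂ ω * μ = ρ := by
      rw [hωdef, map_mul, Complex.conj_conj, mul_right_comm, conj_mul_self_of_norm hμ, one_mul]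
    have e2 : starRingEnd ℂ (μ⁻¹ * ω) = ρ := by
      rw [hωdef, inv_mul_cancel_left₀ (ne_zero_of_norm hμ), Complex.conj_conj]
    have h1 := hS.mono (hF γ ω hγ hω)
    rw [map_real_smul, map_sub, map_sub, hS.map_reL, hS.map_reL, hS.map_reL, map_smul S γ,
      map_smul S (tangent k γ ω), map_smul S (starRingEnd ℂ ω), hSz, smul_add, smul_add, smul_smul, smul_smul, map_add, map_add, e1] at h1
    have h2 := hF (-(γ * μ ^ k)) (μ⁻¹ * ω) (by simp [hγ, hμ]) (by simp [hω, hμ])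
    rw [tangent_neg, tangent_rotate k γ ω hμ, e2, neg_smul, neg_smul, map_neg, map_neg] at h2
    have h3 := reL_smul_le_cabs (tangent k γ ω) v
    have h4 := smul_le_smul_of_nonneg_right (norm_tangent_le k hγ hω) (cabs_nonneg v)
    have h5 := reL_smul_le_cabs (-starRingEnd ℂ ω) v
    rw [neg_smul, map_neg, norm_neg, RCLike.norm_conj, hω, one_smul] at h5
    have h6 : reL (γ • (S F - μ ^ k • F)) = reL (γ • S F) - reL ((γ * μ ^ k) • F) := by
      rw [smul_sub, smul_smul, map_sub]
    have h7 : (2 * C) • reL (ρ • z) ≤ C • (S m + m) + K • cabs v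
        - reL (γ • (S F - μ ^ k • F)) := by
      rw [h6, hK]
      linear_combination (norm := exact le_of_eq (by module)) h1 + h2 + h3 + h4 + C • h5
    have h8 := smul_le_smul_of_nonneg_left h7 (inv_nonneg.2 (by positivity : 0 ≤ 2 * C))
    rwa [smul_smul, inv_mul_cancel₀ (by positivity), one_smul] at h8
  have h1 := smul_le_smul_of_nonneg_left (hm.le_of_forall key) (by positivity : 0 ≤ 2 * C)
  rw [smul_smul, mul_inv_cancel₀ (by positivity), one_smul] at h1
  linear_combination (norm := exact le_of_eq (by module)) h1

/-! ### Cesàro means and the resolvent -/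

/-- Since `1 - l⁻ᵏ T` has the left inverse `G`, the sum of the first `N` iterates of `F` under
`l⁻ᵏ T` equals `G w` with `w = F - (l⁻ᵏ T)ᴺ F`. Comparing it with `N F` through
`IsHomPow.map_sub_le` bounds the modulus of `z` by the iterates of `m`, with errors which are small
when `z` is an approximate eigenvector. -/
lemma cesaro_bound {k : ℤ} {C : ℝ} (hC : 0 < C) {z m F : E} (hm : IsModulus z m)
    (hF : IsHomPow k C z m F) {T G : E →L[ℂ] E} (hT : IsPosOp T) {l : ℂ} (hl : ‖l‖ = 1)
    (hG : G * (1 - (l ^ k)⁻¹ • T) = 1) (N : ℕ) :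
    ∃ w : E, ‖w‖ ≤ 2 * ‖C • ((T ^ N) m - m) + (1 + |(k : ℝ)| + C) • cabs ((T ^ N) z - l ^ N • z)‖ ∧
      ∀ ω : ℂ, ‖ω‖ = 1 → ((N : ℝ) * (1 + C)) • reL (ω • z) ≤
        ∑ n ∈ Finset.range N, (C • (T ^ n) m
          + (1 + |(k : ℝ)| + C) • cabs ((T ^ n) z - l ^ n • z)) + cabs (G w) := by
  set K := 1 + |(k : ℝ)| + C with hK
  set B : E →L[ℂ] E := (l ^ k)⁻¹ • T with hB
  have hBn : ∀ n : ℕ, (B ^ n) F = ((l ^ n) ^ k)⁻¹ • (T ^ n) F := by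
    intro n
    have h : ((l ^ n) ^ k)⁻¹ = ((l ^ k)⁻¹) ^ n := by
      rw [inv_pow, ← zpow_natCast, ← zpow_natCast, ← zpow_mul, ← zpow_mul, mul_comm]
    rw [hB, smul_pow, h]; rfl
  have hw : ∀ (n : ℕ) (γ : ℂ), ‖γ‖ = 1 → reL (γ • (F - (B ^ n) F)) ≤
      C • ((T ^ n) m - m) + K • cabs ((T ^ n) z - l ^ n • z) := by
    intro n γ hγ
    have hln : ‖l ^ n‖ = 1 := by simp [hl]
    have h := hF.map_sub_le hC hm (hT.pow n) hln
      (γ := -(γ * ((l ^ n) ^ k)⁻¹)) (by simp [hγ, hl])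
    have h0 := zpow_ne_zero k (ne_zero_of_norm hln)
    have e : (-(γ * ((l ^ n) ^ k)⁻¹)) • ((T ^ n) F - (l ^ n) ^ k • F) = γ • (F - (B ^ n) F) := by
      rw [hBn, smul_sub, smul_sub, neg_smul, neg_smul, smul_smul, mul_assoc, inv_mul_cancel₀ h0,
        mul_one, smul_smul]
      abel
    rwa [e] at h
  refine ⟨F - (B ^ N) F, norm_le_two_mul (hw N), fun ω hω => ?_⟩
  have hsum : (N : ℝ) • F = ∑ n ∈ Finset.range N, (F - (B ^ n) F) + G (F - (B ^ N) F) := by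
    have h1 : G * (1 - B ^ N) = ∑ n ∈ Finset.range N, B ^ n := by
      rw [← mul_neg_geom_sum, ← mul_assoc, hG, one_mul]
    have h2 : G (F - (B ^ N) F) = ∑ n ∈ Finset.range N, (B ^ n) F := by
      have h3 := congrArg (fun A : E →L[ℂ] E => A F) h1
      simpa using h3
    rw [h2, Finset.sum_sub_distrib, sub_add_cancel, Finset.sum_const, Finset.card_range,
      Nat.cast_smul_eq_nsmul]
  set η := starRingEnd ℂ ω with hη
  have hηn : ‖η‖ = 1 := by simp [hη, hω]
  have hγ : ‖(η ^ k)⁻¹‖ = 1 := by simp [hηn]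
  have hωη : starRingEnd ℂ η = ω := by rw [hη, Complex.conj_conj]
  -- along the ray through `η`, `F` is bounded below by its tangent plane
  have h1 := hF (-(η ^ k)⁻¹) η (by simpa using hγ) hηn
  rw [tangent_neg, tangent_inv_zpow k hηn, hωη, neg_smul, neg_smul, map_neg, map_neg] at h1
  have h2 : (N : ℝ) • reL ((η ^ k)⁻¹ • F) ≤ ∑ n ∈ Finset.range N, (C • ((T ^ n) m - m)
      + K • cabs ((T ^ n) z - l ^ n • z)) + cabs (G (F - (B ^ N) F)) := by
    have h3 : (N : ℝ) • reL ((η ^ k)⁻¹ • F) = reL ((η ^ k)⁻¹ • ((N : ℝ) • F)) := by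
      rw [smul_comm (η ^ k)⁻¹ (N : ℝ) F, map_smul reL (N : ℝ)]
    rw [h3, hsum, smul_add, Finset.smul_sum, map_add, map_sum]
    refine add_le_add (Finset.sum_le_sum fun n _ => hw n _ hγ) ?_
    simpa [hηn] using reL_smul_le_cabs (η ^ k)⁻¹ (G (F - (B ^ N) F))
  have h4 : ∑ n ∈ Finset.range N, (C • ((T ^ n) m - m) + K • cabs ((T ^ n) z - l ^ n • z))
      = ∑ n ∈ Finset.range N, (C • (T ^ n) m + K • cabs ((T ^ n) z - l ^ n • z))
        - (N : ℝ) • C • m := by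
    have h5 : (N : ℝ) • C • m = ∑ n ∈ Finset.range N, C • m := by
      rw [Finset.sum_const, Finset.card_range, Nat.cast_smul_eq_nsmul]
    rw [h5, ← Finset.sum_sub_distrib]
    exact Finset.sum_congr rfl fun n _ => by module
  rw [h4] at h2
  have h5 := smul_le_smul_of_nonneg_left h1 (Nat.cast_nonneg (α := ℝ) N)
  linear_combination (norm := exact le_of_eq (by module)) h5 + h2

/-! ### Asymptotic domination -/

lemma exists_seq_tendsto_zero {S : ℕ → Set E} (hne : ∀ j, (S j).Nonempty)
    (h : ∀ ε > 0, ∀ᶠ j in atTop, ∃ e ∈ S j, ‖e‖ ≤ ε) :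
    ∃ e : ℕ → E, (∀ j, e j ∈ S j) ∧ Tendsto e atTop (𝓝 0) := by
  have h1 : Tendsto (fun j => Metric.infDist 0 (S j)) atTop (𝓝 0) := by
    refine Metric.tendsto_nhds.2 fun ε hε => ?_
    filter_upwards [h (ε / 2) (by positivity)] with j ⟨e, he, hn⟩
    have h2 := Metric.infDist_le_dist_of_mem (x := (0 : E)) he
    rw [dist_zero_left] at h2
    rw [Real.dist_0_eq_abs, abs_of_nonneg Metric.infDist_nonneg]
    linarith
  have h2 : ∀ j : ℕ, ∃ e ∈ S j, ‖e‖ < Metric.infDist 0 (S j) + 1 / ((j : ℝ) + 1) := by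
    intro j
    obtain ⟨e, he, hd⟩ := (Metric.infDist_lt_iff (x := (0 : E)) (hne j)).1
      (lt_add_of_pos_right (Metric.infDist 0 (S j)) (by positivity : 0 < 1 / ((j : ℝ) + 1)))
    exact ⟨e, he, by rwa [dist_zero_left] at hd⟩
  choose e he hn using h2
  refine ⟨e, he, squeeze_zero_norm (fun j => (hn j).le) ?_⟩
  simpa using h1.add (tendsto_one_div_add_atTop_nhds_zero_nat (𝕜 := ℝ))

/-- `|y_j| ≤ x_j` up to an error tending to `0` in norm, with the modulus expressed through
rotated real parts. -/
def AsympDominated (y x : ℕ → E) : Prop :=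
  ∃ e : ℕ → E, Tendsto e atTop (𝓝 0) ∧ ∀ j, ∀ ω : ℂ, ‖ω‖ = 1 → reL (ω • y j) ≤ x j + e j

lemma tendsto_pow_sub {T : E →L[ℂ] E} {l : ℂ} {y : ℕ → E}
    (h : Tendsto (fun j => T (y j) - l • y j) atTop (𝓝 0)) (n : ℕ) :
    Tendsto (fun j => (T ^ n) (y j) - l ^ n • y j) atTop (𝓝 0) := by
  induction n with
  | zero => simp
  | succ n ih =>
    have h1 : Tendsto (fun j => T ((T ^ n) (y j) - l ^ n • y j) + l ^ n • (T (y j) - l • y j)) atTop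
        (𝓝 (T 0 + l ^ n • 0)) := ((T.continuous.tendsto 0).comp ih).add (h.const_smul _)
    rw [map_zero, smul_zero, add_zero] at h1
    refine h1.congr fun j => ?_
    rw [map_sub, map_smul, smul_sub, smul_smul, ← pow_succ, pow_succ' T, sub_add_sub_cancel]
    rfl

lemma tendsto_cabs {v : ℕ → E} (h : Tendsto v atTop (𝓝 0)) :
    Tendsto (fun j => cabs (v j)) atTop (𝓝 0) := by
  rw [tendsto_zero_iff_norm_tendsto_zero] at h ⊢
  simpa only [norm_cabs] using h

/-- Domination improves by the fixed factor `1 + C⁻¹` if `1 - l⁻ᵏ T` has a left inverse: the Cesàro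
means of the powers of `l⁻ᵏ T` are then small on the homogeneous power of `y_j`, whose modulus is
`|y_j|`. So this element differs from its own Cesàro means by about `|y_j|`, while the difference is
at most `C` times the increase of `|y_j|` under `T`, hence at most `C (x_j - |y_j|)`. -/
lemma AsympDominated.improve {k : ℤ} {C : ℝ} (hC : 0 < C)
    (hpow : ∀ z m : E, IsModulus z m → ∃ F : E, IsHomPow k C z m F)
    {T G : E →L[ℂ] E} (hT : IsPosOp T) {l : ℂ} (hl : ‖l‖ = 1)
    (hG : G * (1 - (l ^ k)⁻¹ • T) = 1) {x y : ℕ → E} {M : ℝ} (hM : ∀ j, ‖x j‖ ≤ M)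
    (hx : Tendsto (fun j => T (x j) - x j) atTop (𝓝 0))
    (hy : Tendsto (fun j => T (y j) - l • y j) atTop (𝓝 0))
    (h : AsympDominated y x) : AsympDominated (fun j => (1 + C⁻¹) • y j) x := by
  obtain ⟨e, he, hdom⟩ := h
  choose m hm using fun j => exists_isModulus (y j)
  choose F hF using fun j => hpow _ _ (hm j)
  set K := 1 + |(k : ℝ)| + C with hK
  have hme : ∀ j, m j ≤ x j + e j := fun j => (hm j).le_of_forall (hdom j)
  set a : ℕ → ℕ → E := fun n j => ((T ^ n) (x j) - x j) + (T ^ n) (e j) with ha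
  have ha0 : ∀ n, Tendsto (a n) atTop (𝓝 0) := by
    intro n
    have h1 := tendsto_pow_sub (l := 1) (by simpa using hx) n
    have h2 := ((T ^ n).continuous.tendsto 0).comp he
    simpa [ha] using h1.add h2
  have hTm : ∀ n j, (T ^ n) (m j) ≤ x j + a n j := by
    intro n j
    have h1 := (hT.pow n).mono (hme j)
    rw [map_add] at h1
    simp only [ha]
    linear_combination (norm := exact le_of_eq (by module)) h1
  set v : ℕ → ℕ → E := fun n j => (T ^ n) (y j) - l ^ n • y j with hv
  have hv0 : ∀ n, Tendsto (v n) atTop (𝓝 0) := tendsto_pow_sub hy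
  have key : ∃ e' : ℕ → E, (∀ j, e' j ∈
      {u : E | ∀ ω : ℂ, ‖ω‖ = 1 → reL (ω • ((1 + C⁻¹) • y j)) ≤ x j + u}) ∧
      Tendsto e' atTop (𝓝 0) := by
    refine exists_seq_tendsto_zero (fun j => ⟨cabs ((1 + C⁻¹) • y j) - x j, fun ω hω => ?_⟩)
      fun ε hε => ?_
    · rw [add_sub_cancel]
      simpa [hω] using reL_smul_le_cabs ω ((1 + C⁻¹) • y j)
    -- `L / (N C)` is the limit of the norm of the error made with `N` summands
    set L : ℝ := ‖G‖ * (2 * (C * (M + M))) with hL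
    obtain ⟨N, hN⟩ := exists_nat_gt (max 0 (L / (C * ε)))
    have hN0 : (0 : ℝ) < N := (le_max_left _ _).trans_lt hN
    have hNL : ((N : ℝ) * C)⁻¹ * L < ε := by
      have h1 := (le_max_right _ _).trans_lt hN
      rw [div_lt_iff₀ (by positivity)] at h1
      rw [inv_mul_lt_iff₀ (by positivity)]
      linarith
    choose w hw hbound using fun j => cesaro_bound hC (hm j) (hF j) hT hl hG N
    set s : ℕ → E := fun j => ∑ n ∈ Finset.range N, (C • a n j + K • cabs (v n j)) with hs
    have hs0 : Tendsto s atTop (𝓝 0) := by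
      have h1 : ∀ n ∈ Finset.range N,
          Tendsto (fun j => C • a n j + K • cabs (v n j)) atTop (𝓝 0) := fun n _ => by
        simpa using ((ha0 n).const_smul C).add ((tendsto_cabs (hv0 n)).const_smul K)
      simpa using tendsto_finsetSum _ h1
    have hGw : ∀ j, ‖G (w j)‖ ≤
        ‖G‖ * (2 * (C * ((M + ‖a N j‖) + (M + ‖e j‖)) + K * ‖v N j‖)) := by
      intro j
      refine (G.le_opNorm _).trans (mul_le_mul_of_nonneg_left ((hw j).trans ?_) (norm_nonneg G))
      refine mul_le_mul_of_nonneg_left ?_ (by norm_num)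
      refine (norm_add_le _ _).trans ?_
      have hK0 : 0 ≤ K := by positivity
      rw [norm_smul, norm_smul, norm_cabs, Real.norm_of_nonneg hC.le, Real.norm_of_nonneg hK0]
      have h1 : ‖(T ^ N) (m j)‖ ≤ M + ‖a N j‖ :=
        (norm_le_of_nonneg_le (hT.pow N _ (hm j).nonneg) (hTm N j)).trans
          ((norm_add_le _ _).trans (by linarith [hM j]))
      have h2 : ‖m j‖ ≤ M + ‖e j‖ :=
        (norm_le_of_nonneg_le (hm j).nonneg (hme j)).trans
          ((norm_add_le _ _).trans (by linarith [hM j]))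
      have h3 := norm_sub_le ((T ^ N) (m j)) (m j)
      gcongr
      linarith
    have hlim : Tendsto (fun j => ((N : ℝ) * C)⁻¹ * (‖s j‖ +
        ‖G‖ * (2 * (C * ((M + ‖a N j‖) + (M + ‖e j‖)) + K * ‖v N j‖)))) atTop
        (𝓝 (((N : ℝ) * C)⁻¹ * L)) := by
      have h1 := (((ha0 N).norm.const_add M).add (he.norm.const_add M)).const_mul C
      have h2 := (((h1.add ((hv0 N).norm.const_mul K)).const_mul 2).const_mul ‖G‖)
      have h3 := (hs0.norm.add h2).const_mul ((N : ℝ) * C)⁻¹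
      simpa [hL] using h3
    filter_upwards [hlim.eventually (gt_mem_nhds hNL)] with j hj
    refine ⟨((N : ℝ) * C)⁻¹ • (s j + cabs (G (w j))), fun ω hω => ?_, ?_⟩
    · have h1 := hbound j ω hω
      have h2 : ∑ n ∈ Finset.range N, (C • (T ^ n) (m j) + K • cabs (v n j))
          ≤ ((N : ℝ) * C) • x j + s j := by
        have h3 : ((N : ℝ) * C) • x j + s j
            = ∑ n ∈ Finset.range N, (C • (x j + a n j) + K • cabs (v n j)) := by
          have h4 : ((N : ℝ) * C) • x j = ∑ n ∈ Finset.range N, C • x j := by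
            rw [Finset.sum_const, Finset.card_range, ← Nat.cast_smul_eq_nsmul ℝ, smul_smul]
          rw [h4, hs, ← Finset.sum_add_distrib]
          exact Finset.sum_congr rfl fun n _ => by module
        rw [h3]
        refine Finset.sum_le_sum fun n _ => ?_
        have := smul_le_smul_of_nonneg_left (hTm n j) hC.le
        exact add_le_add this le_rfl
      have h5 : ((N : ℝ) * (1 + C)) • reL (ω • y j)
          ≤ ((N : ℝ) * C) • x j + (s j + cabs (G (w j))) := by
        refine h1.trans ?_
        rw [← add_assoc]
        exact add_le_add h2 le_rfl
      have h6 := smul_le_smul_of_nonneg_left h5 (by positivity : 0 ≤ ((N : ℝ) * C)⁻¹)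
      rw [smul_add, smul_smul, smul_smul, inv_mul_cancel₀ (by positivity), one_smul] at h6
      have h7 : ((N : ℝ) * C)⁻¹ * ((N : ℝ) * (1 + C)) = 1 + C⁻¹ := by field_simp; ring
      rw [h7] at h6
      rwa [smul_comm, map_smul]
    · rw [norm_smul, Real.norm_of_nonneg (by positivity : 0 ≤ ((N : ℝ) * C)⁻¹)]
      refine le_trans (mul_le_mul_of_nonneg_left ?_ (by positivity)) hj.le
      refine (norm_add_le _ _).trans ?_
      rw [norm_cabs]
      linarith [hGw j]
  obtain ⟨e', h1, h2⟩ := key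
  exact ⟨e', h2, h1⟩

/-- The contradiction for `r = 1`: since domination improves geometrically, `(z_j)` would tend to
`0`. -/
lemma not_leftInverse {T G : E →L[ℂ] E} (hT : IsPosOp T) {l : ℂ} (hl : ‖l‖ = 1) (k : ℤ)
    {x z : ℕ → E} {M c : ℝ} (hM : ∀ j, ‖x j‖ ≤ M) (hc : 0 < c) (hz : ∀ᶠ j in atTop, c ≤ ‖z j‖)
    (hTx : Tendsto (fun j => T (x j) - x j) atTop (𝓝 0))
    (hTz : Tendsto (fun j => T (z j) - l • z j) atTop (𝓝 0))
    (hzx : ∀ j, cabs (z j) ≤ x j) : G * (1 - (l ^ k)⁻¹ • T) ≠ 1 := by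
  intro hG
  obtain ⟨C, hC, hpow⟩ := exists_isHomPow (E := E) k
  have hdom : ∀ n : ℕ, AsympDominated (fun j => ((1 + C⁻¹) ^ n) • z j) x := by
    intro n
    induction n with
    | zero =>
      refine ⟨0, tendsto_const_nhds, fun j ω hω => ?_⟩
      have h := reL_smul_le_cabs ω (z j)
      rw [hω, one_smul] at h
      simpa using h.trans (hzx j)
    | succ n ih =>
      have hy : Tendsto (fun j => T (((1 + C⁻¹) ^ n) • z j) - l • (((1 + C⁻¹) ^ n) • z j)) atTop
          (𝓝 0) := by
        have h := hTz.const_smul ((1 + C⁻¹) ^ n)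
        rw [smul_zero] at h
        refine h.congr fun j => ?_
        rw [map_real_smul, smul_sub, smul_comm l]
      have h := ih.improve hC hpow hT hl hG hM hTx hy
      simpa only [smul_smul, ← pow_succ'] using h
  have hM0 : 0 ≤ M := (norm_nonneg _).trans (hM 0)
  obtain ⟨n, hn⟩ := pow_unbounded_of_one_lt (2 * (M + 1) / c)
    (lt_add_of_pos_right 1 (inv_pos.2 hC))
  rw [div_lt_iff₀ hc] at hn
  obtain ⟨e, he, hdn⟩ := hdom n
  have he1 : ∀ᶠ j in atTop, ‖e j‖ < 1 := by
    have := he.norm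
    rw [norm_zero] at this
    exact this.eventually (gt_mem_nhds one_pos)
  obtain ⟨j, hj1, hj2⟩ := (he1.and hz).exists
  have h1 := norm_le_two_mul (hdn j)
  have hp : 0 ≤ (1 + C⁻¹) ^ n := by positivity
  rw [norm_smul, Real.norm_of_nonneg hp] at h1
  have h2 := norm_add_le (x j) (e j)
  have h3 := hM j
  nlinarith [mul_le_mul_of_nonneg_left hj2 hp]

end DominatedApprox

/-- Theorem 3.3: if `r e^{iθ}` (with `r > 0`) is an approximate eigenvalue of the
positive operator `T` fulfilling the dominated approximate eigenvector condition,
then `r e^{ikθ} ∈ σ(T)` for all `k ∈ ℤ`. -/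
theorem dominated_approximate_eigenvector_condition
    {E : Type*} [ComplexBanachLattice E] (T : E →L[ℂ] E)
    (hTpos : IsPosOp T)
    (r : ℝ) (hr : 0 < r) (θ : ℝ)
    (hdaec : ∃ zs xs : ℕ → E,
      IsApproxEigenvector T ((r : ℂ) * Complex.exp ((θ : ℂ) * Complex.I)) zs ∧
      IsApproxEigenvector T (r : ℂ) xs ∧
      ∀ n, cabs (zs n) ≤ xs n) :
    ∀ k : ℤ, (r : ℂ) * Complex.exp ((k : ℂ) * (θ : ℂ) * Complex.I) ∈ spectrum ℂ T := by
  intro k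
  obtain ⟨zs, xs, ⟨⟨c, hc, hz⟩, -, hTz⟩, ⟨-, ⟨M, hM⟩, hTx⟩, hzx⟩ := hdaec
  set l : ℂ := Complex.exp ((θ : ℂ) * Complex.I) with hl
  have hln : ‖l‖ = 1 := Complex.norm_exp_ofReal_mul_I θ
  have hlk : Complex.exp ((k : ℂ) * (θ : ℂ) * Complex.I) = l ^ k := by
    rw [hl, ← Complex.exp_int_mul, mul_assoc]
  rw [hlk, spectrum.mem_iff]
  rintro ⟨u, hu⟩
  have hr0 : (r : ℂ) ≠ 0 := by exact_mod_cast hr.ne'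
  have hlk0 : l ^ k ≠ 0 := zpow_ne_zero k (Complex.exp_ne_zero _)
  have hscale : ∀ (μ : ℂ) (y : ℕ → E), Tendsto (fun n => ((r : ℂ) * μ) • y n - T (y n)) atTop (𝓝 0) →
      Tendsto (fun n => ((r : ℂ)⁻¹ • T) (y n) - μ • y n) atTop (𝓝 0) := by
    intro μ y h
    have h1 := h.const_smul (-(r : ℂ)⁻¹)
    rw [smul_zero] at h1
    refine h1.congr fun n => ?_
    rw [smul_sub, smul_smul, neg_mul, inv_mul_cancel_left₀ hr0, smul_apply]
    module
  have hpos : IsPosOp ((r : ℂ)⁻¹ • T) := by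
    intro x hx
    have h := smul_nonneg' r⁻¹ (T x) (inv_nonneg.2 hr.le) (hTpos x hx)
    rwa [Complex.ofReal_inv] at h
  refine DominatedApprox.not_leftInverse (G := ((r : ℂ) * l ^ k) • (↑u⁻¹ : E →L[ℂ] E)) hpos hln k
    hM hc hz ?_ (hscale l zs hTz) hzx ?_
  · simpa using hscale 1 xs (by simpa using hTx)
  · have h1 : (1 - (l ^ k)⁻¹ • (r : ℂ)⁻¹ • T : E →L[ℂ] E)
        = ((r : ℂ) * l ^ k)⁻¹ • (u : E →L[ℂ] E) := by
      rw [hu, Algebra.algebraMap_eq_smul_one, smul_sub,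
        inv_smul_smul₀ (mul_ne_zero hr0 hlk0), smul_smul, mul_inv, mul_comm (r : ℂ)⁻¹]
    rw [h1, smul_mul_smul_comm, mul_inv_cancel₀ (mul_ne_zero hr0 hlk0), one_smul, Units.inv_mul]
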